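/- Let k be odd and let G=(V,E) be a k-uniform hyperstar of size d>0 with Laplacian tensor L. Then λ(L) = d. -/

import Mathlib

open Finset

variable {α : Type*} [DecidableEq α]

/-- The degree of a vertex `i`: the number of edges containing `i`. -/
def hdeg (E : Finset (Finset α)) (i : α) : ℕ := (E.filter (fun e => i ∈ e)).card

/-- The action of the Laplacian tensor: `(L x^{k-1})_i`. -/
def lapAct (k : ℕ) (E : Finset (Finset α)) (x : α → ℝ) (i : α) : ℝ :=
  (hdeg E i : ℝ) * x i ^ (k - 1) - ∑ e ∈ E.filter (fun e => i ∈ e), ∏ j ∈ e.erase i, x j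

/-- The action of the signless Laplacian tensor: `(Q x^{k-1})_i`. -/
def signAct (k : ℕ) (E : Finset (Finset α)) (x : α → ℝ) (i : α) : ℝ :=
  (hdeg E i : ℝ) * x i ^ (k - 1) + ∑ e ∈ E.filter (fun e => i ∈ e), ∏ j ∈ e.erase i, x j

/-- The action of the adjacency tensor: `(A x^{k-1})_i`. -/
def adjAct (E : Finset (Finset α)) (x : α → ℝ) (i : α) : ℝ :=
  ∑ e ∈ E.filter (fun e => i ∈ e), ∏ j ∈ e.erase i, x j

/-- `lam` is an H-eigenvalue of the Laplacian tensor. -/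
def IsLapEig (k : ℕ) (E : Finset (Finset α)) (lam : ℝ) : Prop :=
  ∃ x : α → ℝ, x ≠ 0 ∧ ∀ i, lapAct k E x i = lam * x i ^ (k - 1)

/-- `lam` is the largest H-eigenvalue of the Laplacian tensor. -/
def IsLargestLapEig (k : ℕ) (E : Finset (Finset α)) (lam : ℝ) : Prop :=
  IsLapEig k E lam ∧ ∀ mu : ℝ, IsLapEig k E mu → mu ≤ lam

/-- `lam` is an H-eigenvalue of the signless Laplacian tensor. -/
def IsSignEig (k : ℕ) (E : Finset (Finset α)) (lam : ℝ) : Prop :=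
  ∃ x : α → ℝ, x ≠ 0 ∧ ∀ i, signAct k E x i = lam * x i ^ (k - 1)

/-- `lam` is the largest H-eigenvalue of the signless Laplacian tensor. -/
def IsLargestSignEig (k : ℕ) (E : Finset (Finset α)) (lam : ℝ) : Prop :=
  IsSignEig k E lam ∧ ∀ mu : ℝ, IsSignEig k E mu → mu ≤ lam

/-- `lam` is an H-eigenvalue of the adjacency tensor. -/
def IsAdjEig (k : ℕ) (E : Finset (Finset α)) (lam : ℝ) : Prop :=
  ∃ x : α → ℝ, x ≠ 0 ∧ ∀ i, adjAct E x i = lam * x i ^ (k - 1)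

/-- `lam` is the largest H-eigenvalue of the adjacency tensor. -/
def IsLargestAdjEig (k : ℕ) (E : Finset (Finset α)) (lam : ℝ) : Prop :=
  IsAdjEig k E lam ∧ ∀ mu : ℝ, IsAdjEig k E mu → mu ≤ lam

/-- `G = (V, E)` is a `k`-uniform hyperstar of size `d`: there is a heart `h` and a
disjoint partition of the remaining vertices into `d` parts of size `k-1`, the edges
being the heart together with one part. -/
def IsHyperstar (k d : ℕ) (E : Finset (Finset α)) : Prop :=
  ∃ (h : α) (P : Fin d → Finset α),
    (∀ i, h ∉ P i) ∧
    (∀ i, (P i).card = k - 1) ∧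
    (∀ i j, i ≠ j → Disjoint (P i) (P j)) ∧
    (∀ v : α, v ≠ h → ∃ i, v ∈ P i) ∧
    E = Finset.image (fun i => insert h (P i)) Finset.univ

/-- The hypergraph is connected: any two distinct vertices are joined by a chain of
pairwise intersecting edges. -/
def IsConnectedH (E : Finset (Finset α)) : Prop :=
  ∀ i j : α, i ≠ j → Relation.TransGen (fun a b : α => ∃ e ∈ E, a ∈ e ∧ b ∈ e) i j

/-- For `k` even: the hypergraph is odd-bipartite. -/
def IsOddBipartite [Fintype α] (E : Finset (Finset α)) : Prop :=
  E = ∅ ∨ ∃ V₁ : Finset α, V₁ ≠ ∅ ∧ V₁ ≠ Finset.univ ∧ ∀ e ∈ E, Odd (e ∩ V₁).card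

/-- `G = (V, E)` is a `k`-uniform hypercycle of size `s`. -/
def IsHypercycle (k : ℕ) (s : ℕ) [NeZero s] (E : Finset (Finset α)) : Prop :=
  ∃ P : Fin s → Finset α,
    (∀ i, (P i).card = k) ∧
    (∀ v : α, ∃ i, v ∈ P i) ∧
    E = Finset.image P Finset.univ ∧
    (∀ i : Fin s, (P i ∩ P (i + 1)).card = 1) ∧
    (∀ i j : Fin s, i ≠ j → j ≠ i + 1 → i ≠ j + 1 → P i ∩ P j = ∅) ∧
    Function.Injective (fun i : Fin s => P i ∩ P (i + 1))
theorem hyperstar_filter_heart {d : ℕ} {h : α} {P : Fin d → Finset α} :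
    (Finset.image (fun i => insert h (P i)) Finset.univ).filter (fun e => h ∈ e)
      = Finset.image (fun i => insert h (P i)) Finset.univ := by
  apply Finset.filter_true_of_mem
  intro e he
  simp only [Finset.mem_image, Finset.mem_univ, true_and] at he
  obtain ⟨i, rfl⟩ := he
  simp

theorem hyperstar_filter_leaf {d : ℕ} {h : α} {P : Fin d → Finset α}
    (hdisj : ∀ i j, i ≠ j → Disjoint (P i) (P j)) {v : α} (hv : v ≠ h) {i : Fin d}
    (hvi : v ∈ P i) :
    (Finset.image (fun i => insert h (P i)) Finset.univ).filter (fun e => v ∈ e)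
      = {insert h (P i)} := by
  ext e
  simp only [Finset.mem_filter, Finset.mem_image, Finset.mem_univ, true_and, Finset.mem_singleton]
  constructor
  · rintro ⟨⟨j, rfl⟩, hj⟩
    have hj' : v ∈ P j := (Finset.mem_insert.1 hj).resolve_left hv
    by_cases hij : i = j
    · rw [hij]
    · exact absurd hj' (Finset.disjoint_left.1 (hdisj i j hij) hvi)
  · rintro rfl
    exact ⟨⟨i, rfl⟩, Finset.mem_insert_of_mem hvi⟩

theorem hyperstar_inj {k d : ℕ} (hk : 3 ≤ k) {h : α} {P : Fin d → Finset α}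
    (hh : ∀ i, h ∉ P i) (hcard : ∀ i, (P i).card = k - 1)
    (hdisj : ∀ i j, i ≠ j → Disjoint (P i) (P j)) :
    Function.Injective (fun i => insert h (P i)) := by
  intro i j hij
  by_contra hne
  have h1 : P i = P j := by
    have := congrArg (fun s => Finset.erase s h) hij
    simpa [Finset.erase_insert (hh i), Finset.erase_insert (hh j)] using this
  have h2 := hdisj i j hne
  rw [h1, disjoint_self] at h2
  have h3 := hcard j
  rw [h2] at h3
  simp at h3
  omega

theorem hyperstar_lapAct_heart {k d : ℕ} (hk : 3 ≤ k) {h : α} {P : Fin d → Finset α}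
    (hh : ∀ i, h ∉ P i) (hcard : ∀ i, (P i).card = k - 1)
    (hdisj : ∀ i j, i ≠ j → Disjoint (P i) (P j)) (x : α → ℝ) :
    lapAct k (Finset.image (fun i => insert h (P i)) Finset.univ) x h
      = (d : ℝ) * x h ^ (k - 1) - ∑ i, ∏ j ∈ P i, x j := by
  have inj := hyperstar_inj hk hh hcard hdisj
  unfold lapAct hdeg
  rw [hyperstar_filter_heart, Finset.card_image_of_injective _ inj,
    Finset.sum_image (fun a _ b _ hab => inj hab)]
  simp [Finset.erase_insert (hh _)]

theorem hyperstar_lapAct_leaf {k d : ℕ} {h : α} {P : Fin d → Finset α}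
    (hh : ∀ i, h ∉ P i) 
    (hdisj : ∀ i j, i ≠ j → Disjoint (P i) (P j)) (x : α → ℝ) {v : α} {i : Fin d}
    (hvi : v ∈ P i) :
    lapAct k (Finset.image (fun i => insert h (P i)) Finset.univ) x v
      = x v ^ (k - 1) - x h * ∏ j ∈ (P i).erase v, x j := by
  have hv : v ≠ h := fun e => hh i (e ▸ hvi)
  unfold lapAct hdeg
  rw [hyperstar_filter_leaf hdisj hv hvi]
  simp only [Finset.card_singleton, Nat.cast_one, one_mul, Finset.sum_singleton]
  rw [Finset.erase_insert_of_ne hv.symm, Finset.prod_insert]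
  exact fun hc => hh i (Finset.mem_of_mem_erase hc)

/-- For `k` odd and a `k`-uniform hyperstar of size `d > 0` with Laplacian
tensor `L`, we have `λ(L) = d`. -/
theorem largest_lap_eig_hyperstar_odd {n k d : ℕ} (hk : 3 ≤ k) (hkn : k ≤ n)
    (hkodd : Odd k) (hd : 0 < d) (E : Finset (Finset (Fin n)))
    (hstar : IsHyperstar k d E) (lam : ℝ) (hlam : IsLargestLapEig k E lam) :
    lam = (d : ℝ) := by
  obtain ⟨h, P, hh, hcard, hdisj, hcov, rfl⟩ := hstar
  obtain ⟨⟨x, hx0, hx⟩, hmax⟩ := hlam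
  have hge : (d : ℝ) ≤ lam := by
    apply hmax
    refine ⟨fun v => if v = h then 1 else 0, fun hc => ?_, fun v => ?_⟩
    · have := congrFun hc h
      simp at this
    · by_cases hv : v = h
      · subst hv
        rw [hyperstar_lapAct_heart hk hh hcard hdisj]
        have : ∀ i, ∏ j ∈ P i, (if j = v then (1 : ℝ) else 0) = 0 := by
          intro i
          obtain ⟨w, hw⟩ : (P i).Nonempty := by
            rw [← Finset.card_pos, hcard]; omega
          exact Finset.prod_eq_zero hw (if_neg fun e : w = v => hh i (e ▸ hw))
        simp [this]
      · obtain ⟨i, hi⟩ := hcov v hv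
        rw [hyperstar_lapAct_leaf hh hdisj _ hi]
        obtain ⟨w, hw⟩ : ((P i).erase v).Nonempty := by
          rw [← Finset.card_pos, Finset.card_erase_of_mem hi, hcard]; omega
        have : ∏ j ∈ (P i).erase v, (if j = h then (1 : ℝ) else 0) = 0 :=
          Finset.prod_eq_zero hw (if_neg fun e : w = h => hh i (e ▸ Finset.mem_of_mem_erase hw))
        have hk1 : k - 1 ≠ 0 := by omega
        simp [this, hv, hk1]
  refine le_antisymm ?_ hge
  by_contra hlt
  push Not at hlt
  have hd1 : (1 : ℝ) ≤ d := by exact_mod_cast hd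
  have hleaf : ∀ i, ∀ v ∈ P i,
      (1 - lam) * x v ^ (k - 1) = x h * ∏ j ∈ (P i).erase v, x j := by
    intro i v hv
    have := hx v
    rw [hyperstar_lapAct_leaf hh hdisj _ hv] at this
    linarith
  have hpow : ∀ i, ∀ v ∈ P i, (1 - lam) * x v ^ k = x h * ∏ j ∈ P i, x j := by
    intro i v hv
    have h1 := hleaf i v hv
    rw [← Finset.mul_prod_erase _ _ hv]
    have h2 : x v ^ k = x v ^ (k - 1) * x v := by
      rw [← pow_succ]; congr 1; omega
    rw [h2]
    linear_combination x v * h1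
  have heven : Even (k - 1) := Nat.Odd.sub_odd hkodd odd_one
  have hnn : ∀ i, 0 ≤ ∏ j ∈ P i, x j := by
    intro i
    obtain ⟨w, hw⟩ : (P i).Nonempty := by
      rw [← Finset.card_pos, hcard]; omega
    have heq : ∀ v ∈ P i, x v = x w := by
      intro v hv
      have h3 : x v ^ k = x w ^ k :=
        mul_left_cancel₀ (by linarith : (1 - lam) ≠ 0) ((hpow i v hv).trans (hpow i w hw).symm)
      exact hkodd.strictMono_pow.injective h3
    rw [Finset.prod_congr rfl heq, Finset.prod_const, hcard]
    exact heven.pow_nonneg _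
  have hheart := hx h
  rw [hyperstar_lapAct_heart hk hh hcard hdisj] at hheart
  have hsum : 0 ≤ ∑ i, ∏ j ∈ P i, x j := Finset.sum_nonneg fun i _ => hnn i
  have hyn : 0 ≤ x h ^ (k - 1) := heven.pow_nonneg _
  have hk1 : k - 1 ≠ 0 := by omega
  have hy : x h = 0 := by
    have : x h ^ (k - 1) = 0 := by nlinarith
    exact pow_eq_zero_iff hk1 |>.1 this
  apply hx0
  funext v
  by_cases hv : v = h
  · rw [hv, hy]; rfl
  · obtain ⟨i, hi⟩ := hcov v hv
    have h1 := hleaf i v hi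
    rw [hy, zero_mul] at h1
    rcases mul_eq_zero.1 h1 with h2 | h2
    · linarith
    · exact pow_eq_zero_iff hk1 |>.1 h2
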